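/- arXiv:2008.08675 — 2 statements merged into one kernel-verified Lean document; each statement's English description precedes it below -/
import Mathlib

section
/- Let f be a deep linear fully connected network of depth d and width n, and let Θ be its neural tangent kernel. Then for all inputs x, x' ∈ ℝ^{d_0} and all n ≥ 1, E_θ[Θ(x,x')] = (d+1) ⟨x, x'⟩ / d_0, independent of n. -/
open MeasureTheory ProbabilityTheory

namespace DeepLinearFC

/-- Parameter index type for a deep linear fully connected network of depth `d` and width `n`
on inputs in `ℝ^{d0}`: the readout vector `v` (`Fin n`), the first-layer matrix `W^(1)`
(`Fin n × Fin d0`), and the higher-layer matrices `W^(2), …, W^(d)`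
(`Fin (d-1) × Fin n × Fin n`). -/
abbrev Param (d0 d n : ℕ) : Type :=
  Fin n ⊕ (Fin n × Fin d0) ⊕ (Fin (d - 1) × Fin n × Fin n)

/-- Hidden activations: `hidden d0 d n θ x ℓ` is `W^(ℓ+1) ⋯ W^(2) W^(1) x`. -/
def hidden (d0 d n : ℕ) (θ : Param d0 d n → ℝ) (x : Fin d0 → ℝ) : ℕ → Fin n → ℝ
  | 0 => fun i => ∑ j : Fin d0, θ (.inr (.inl (i, j))) * x j
  | ℓ + 1 => fun i => ∑ j : Fin n,
      (if h : ℓ < d - 1 then θ (.inr (.inr (⟨ℓ, h⟩, i, j))) else 0) * hidden d0 d n θ x ℓ j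

/-- The deep linear fully connected network
`f(x) = n^{-d/2} d0^{-1/2} vᵀ W^(d) ⋯ W^(2) W^(1) x`. -/
noncomputable def net (d0 d n : ℕ) (θ : Param d0 d n → ℝ) (x : Fin d0 → ℝ) : ℝ :=
  (Real.sqrt ((n : ℝ) ^ d * (d0 : ℝ)))⁻¹ *
    ∑ i : Fin n, θ (.inl i) * hidden d0 d n θ x (d - 1) i

/-- All parameters are i.i.d. standard Gaussians. -/
noncomputable def gaussParam (d0 d n : ℕ) : Measure (Param d0 d n → ℝ) :=
  Measure.pi fun _ => gaussianReal 0 1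

/-- The neural tangent kernel `Θ(x,x') = Σ_μ ∂f(x)/∂θ_μ ⬝ ∂f(x')/∂θ_μ`. -/
noncomputable def NTK (d0 d n : ℕ) (θ : Param d0 d n → ℝ) (x x' : Fin d0 → ℝ) : ℝ :=
  ∑ μ : Param d0 d n,
    fderiv ℝ (fun θ' => net d0 d n θ' x) θ (Pi.single μ 1) *
    fderiv ℝ (fun θ' => net d0 d n θ' x') θ (Pi.single μ 1)

/-!
Expanding the matrix products writes `f` as a sum over paths through the network, one squarefree
monomial of degree `d + 1` in the parameters for each path. Distinct paths use distinct sets of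
parameters, and the squarefree monomials in independent standardized variables are orthonormal.
Hence in `E ∑_μ ∂_μ f(x) ∂_μ f(x')` only the pairs of equal paths survive, each counted once for
every parameter on it: the mean kernel is `d + 1` times the inner product of the coefficients of
`f(x)` and `f(x')`. The `n ^ d` paths starting at a given input coordinate cancel the `n` in the
normalization.
-/

section Standardized

/-- A probability law on `ℝ` with mean zero and variance one. The equation for the second moment
also forces square-integrability, because the Bochner integral of a non-integrable function
is `0`. -/
class IsStandardized (ν : Measure ℝ) : Prop extends IsProbabilityMeasure ν where
  integral_id : ∫ t, t ∂ν = 0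
  integral_sq : ∫ t, t ^ 2 ∂ν = 1

instance isStandardized_gaussianReal : IsStandardized (gaussianReal 0 1) where
  integral_id := integral_id_gaussianReal
  integral_sq := by
    have h := variance_fun_id_gaussianReal (μ := 0) (v := 1)
    rw [variance_of_integral_eq_zero (by fun_prop) integral_id_gaussianReal] at h
    simpa using h

namespace IsStandardized

variable {ν : Measure ℝ} [IsStandardized ν]

lemma integrable_sq : Integrable (fun t : ℝ => t ^ 2) ν :=
  .of_integral_ne_zero (by simp [integral_sq])

lemma integrable_id : Integrable (fun t : ℝ => t) ν :=
  ((memLp_two_iff_integrable_sq (by fun_prop)).2 integrable_sq).integrable one_le_two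

lemma integrable_ite_mul_ite (p q : Prop) [Decidable p] [Decidable q] :
    Integrable (fun t : ℝ => (if p then t else 1) * (if q then t else 1)) ν := by
  by_cases hp : p <;> by_cases hq : q <;>
    simp [hp, hq, ← pow_two, integrable_id, integrable_sq]

lemma integral_ite_mul_ite (p q : Prop) [Decidable p] [Decidable q] :
    ∫ t : ℝ, (if p then t else 1) * (if q then t else 1) ∂ν = if p ↔ q then 1 else 0 := by
  by_cases hp : p <;> by_cases hq : q <;>
    simp [hp, hq, ← pow_two, integral_id, integral_sq]

end IsStandardized

end Standardized

section Monomials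

lemma prod_mul_prod_eq_prod_ite {P R : Type*} [Fintype P] [DecidableEq P] [CommMonoid R]
    (A B : Finset P) (θ : P → R) :
    (∏ p ∈ A, θ p) * ∏ p ∈ B, θ p =
      ∏ p, (if p ∈ A then θ p else 1) * (if p ∈ B then θ p else 1) := by
  rw [Finset.prod_mul_distrib]
  simp only [Finset.prod_ite_mem, Finset.univ_inter]

/-- The partial derivative along the coordinate `q` of the squarefree monomial
`θ ↦ ∏ p ∈ A, θ p`. -/
def monomialPartial {P R : Type*} [DecidableEq P] [CommSemiring R] (q : P) (A : Finset P)
    (θ : P → R) : R :=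
  if q ∈ A then ∏ p ∈ A.erase q, θ p else 0

/-- The polynomial with coefficient `a γ` at the squarefree monomial `∏ p ∈ S γ, θ p`. -/
def squarefreePoly {P R Γ : Type*} [CommSemiring R] [Fintype Γ] (S : Γ → Finset P) (a : Γ → R)
    (θ : P → R) : R :=
  ∑ γ, a γ * ∏ p ∈ S γ, θ p

lemma fderiv_squarefreePoly_single {P 𝕜 Γ : Type*} [Finite P] [DecidableEq P]
    [NontriviallyNormedField 𝕜] [Fintype Γ] (S : Γ → Finset P) (a : Γ → 𝕜) (θ : P → 𝕜) (q : P) :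
    fderiv 𝕜 (squarefreePoly S a) θ (Pi.single q 1) = ∑ γ, a γ * monomialPartial q (S γ) θ := by
  cases nonempty_fintype P
  have h : HasFDerivAt (squarefreePoly S a)
      (∑ γ, a γ • ∑ p ∈ S γ, (∏ r ∈ (S γ).erase p, θ r) •
        (ContinuousLinearMap.proj p : (P → 𝕜) →L[𝕜] 𝕜)) θ :=
    .fun_sum fun γ _ => (HasFDerivAt.finsetProd fun p _ => hasFDerivAt_apply p θ).const_mul (a γ)
  simp [h.fderiv, monomialPartial, Pi.single_apply]

variable {P : Type*} [Fintype P] {ν : P → Measure ℝ} [∀ p, IsStandardized (ν p)]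

lemma integrable_monomial_mul_monomial (A B : Finset P) :
    Integrable (fun θ : P → ℝ => (∏ p ∈ A, θ p) * ∏ p ∈ B, θ p) (Measure.pi ν) := by
  classical
  simp_rw [prod_mul_prod_eq_prod_ite]
  exact .fintype_prod fun p => IsStandardized.integrable_ite_mul_ite (p ∈ A) (p ∈ B)

variable [DecidableEq P]

lemma integral_monomial_mul_monomial (A B : Finset P) :
    ∫ θ : P → ℝ, (∏ p ∈ A, θ p) * ∏ p ∈ B, θ p ∂Measure.pi ν = if A = B then 1 else 0 := by
  simp_rw [prod_mul_prod_eq_prod_ite]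
  rw [integral_fintype_prod_eq_prod
    fun p (t : ℝ) => (if p ∈ A then t else 1) * (if p ∈ B then t else 1)]
  simp_rw [IsStandardized.integral_ite_mul_ite, Finset.prod_ite_zero, Finset.ext_iff]
  simp

lemma integrable_monomialPartial_mul (q : P) (A B : Finset P) :
    Integrable (fun θ => monomialPartial q A θ * monomialPartial q B θ) (Measure.pi ν) := by
  by_cases hA : q ∈ A <;> by_cases hB : q ∈ B <;>
    simp [monomialPartial, hA, hB, integrable_monomial_mul_monomial]

lemma integral_monomialPartial_mul (q : P) (A B : Finset P) :
    ∫ θ, monomialPartial q A θ * monomialPartial q B θ ∂Measure.pi ν =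
      if A = B ∧ q ∈ A then 1 else 0 := by
  by_cases hA : q ∈ A <;> by_cases hB : q ∈ B
  · simp [monomialPartial, hA, hB, integral_monomial_mul_monomial,
      (Finset.erase_injOn' q).eq_iff hA hB]
  · simp [monomialPartial, hA, hB, ne_of_mem_of_not_mem' hA hB]
  · simp [monomialPartial, hA]
  · simp [monomialPartial, hA]

theorem integral_sum_fderiv_squarefreePoly_mul {Γ : Type*} [Fintype Γ] {S : Γ → Finset P}
    (hS : Function.Injective S) (a b : Γ → ℝ) :
    ∫ θ, ∑ q, fderiv ℝ (squarefreePoly S a) θ (Pi.single q 1) *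
        fderiv ℝ (squarefreePoly S b) θ (Pi.single q 1) ∂Measure.pi ν =
      ∑ γ, ((S γ).card : ℝ) * (a γ * b γ) := by
  classical
  have hint (q : P) (γ δ : Γ) : Integrable (fun θ => (a γ * b δ) *
      (monomialPartial q (S γ) θ * monomialPartial q (S δ) θ)) (Measure.pi ν) :=
    (integrable_monomialPartial_mul q (S γ) (S δ)).const_mul _
  calc
    _ = ∫ θ, ∑ q, ∑ γ, ∑ δ, (a γ * b δ) *
          (monomialPartial q (S γ) θ * monomialPartial q (S δ) θ) ∂Measure.pi ν := by
      simp_rw [fderiv_squarefreePoly_single, Finset.sum_mul_sum, mul_mul_mul_comm]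
    _ = ∑ q, ∑ γ, ∑ δ, (a γ * b δ) * if S γ = S δ ∧ q ∈ S γ then 1 else 0 := by
      simp_rw [← integral_monomialPartial_mul (ν := ν), ← integral_const_mul]
      rw [integral_finsetSum _ fun q _ => integrable_finsetSum _ fun γ _ =>
        integrable_finsetSum _ fun δ _ => hint q γ δ]
      refine Finset.sum_congr rfl fun q _ => ?_
      rw [integral_finsetSum _ fun γ _ => integrable_finsetSum _ fun δ _ => hint q γ δ]
      exact Finset.sum_congr rfl fun γ _ => integral_finsetSum _ fun δ _ => hint q γ δ
    _ = ∑ q, ∑ γ, if q ∈ S γ then a γ * b γ else 0 := by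
      simp [hS.eq_iff, ite_and]
    _ = ∑ γ, ((S γ).card : ℝ) * (a γ * b γ) := by
      rw [Finset.sum_comm]
      simp

end Monomials

section Paths

variable {V : Type*} {m : ℕ}

/-- The `k`-th edge of a path `p` through `m + 1` layers of neurons. The triple `(k, i, j)` stands
for the edge from the neuron `j` of layer `k` to the neuron `i` of the next layer, in the order of
the indices of a weight matrix `W i j`. -/
def pathEdge (p : Fin (m + 1) → V) (k : Fin m) : Fin m × V × V :=
  (k, p k.succ, p k.castSucc)

lemma pathEdge_injective (p : Fin (m + 1) → V) : Function.Injective (pathEdge p) :=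
  fun _ _ h => congrArg Prod.fst h

/-- The set of edges of a path `p` through `m + 1` layers of neurons. -/
def pathEdges (p : Fin (m + 1) → V) : Finset (Fin m × V × V) :=
  Finset.univ.map ⟨pathEdge p, pathEdge_injective p⟩

lemma mem_pathEdges {p : Fin (m + 1) → V} {k : Fin m} {i j : V} :
    (k, i, j) ∈ pathEdges p ↔ p k.succ = i ∧ p k.castSucc = j := by
  simp [pathEdges, pathEdge]

lemma path_eq_of_pathEdges_eq {p q : Fin (m + 1) → V} (h0 : p 0 = q 0)
    (h : pathEdges p = pathEdges q) : p = q := by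
  refine funext <| Fin.cases h0 fun k => ?_
  have hk : (k, p k.succ, p k.castSucc) ∈ pathEdges q := h ▸ mem_pathEdges.2 ⟨rfl, rfl⟩
  exact (mem_pathEdges.1 hk).1.symm

variable {d0 d n : ℕ}

/-- Paths through the network: `γ.2` is the input coordinate at which `γ` starts and `γ.1` lists the
hidden neurons it visits. There are `d - 1 + 1` hidden layers, which is `d` for a network of
positive depth. -/
abbrev NetPath (d0 d n : ℕ) : Type :=
  (Fin (d - 1 + 1) → Fin n) × Fin d0

/-- The parameters along a path: the readout weight of its last neuron, the first-layer weight at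
its start, and the weights of its edges between hidden neurons. -/
def pathParams (γ : NetPath d0 d n) : Finset (Param d0 d n) :=
  Finset.disjSum {γ.1 (Fin.last (d - 1))} (Finset.disjSum {(γ.1 0, γ.2)} (pathEdges γ.1))

lemma card_pathParams (hd : 1 ≤ d) (γ : NetPath d0 d n) :
    (pathParams γ).card = d + 1 := by
  have h : (pathParams γ).card = 1 + (1 + (d - 1)) := by simp [pathParams, pathEdges]
  omega

lemma pathParams_injective :
    Function.Injective (pathParams : NetPath d0 d n → Finset (Param d0 d n)) := by
  rintro ⟨p, j⟩ ⟨q, k⟩ h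
  simp only [pathParams, Finset.disjSum_inj, Finset.singleton_inj, Prod.mk.injEq] at h
  obtain ⟨-, ⟨h0, hjk⟩, hedges⟩ := h
  exact Prod.ext (path_eq_of_pathEdges_eq h0 hedges) hjk

lemma prod_pathParams {R : Type*} [CommMonoid R] (γ : NetPath d0 d n)
    (θ : Param d0 d n → R) :
    ∏ p ∈ pathParams γ, θ p = θ (.inl (γ.1 (Fin.last (d - 1)))) * (θ (.inr (.inl (γ.1 0, γ.2))) *
      ∏ k, θ (.inr (.inr (k, γ.1 k.succ, γ.1 k.castSucc)))) := by
  simp [pathParams, pathEdges, pathEdge]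

end Paths

section Network

variable {d0 d n : ℕ}

lemma hidden_succ (θ : Param d0 d n → ℝ) (x : Fin d0 → ℝ) {l : ℕ} (hl : l < d - 1) (i : Fin n) :
    hidden d0 d n θ x (l + 1) i =
      ∑ j, θ (.inr (.inr (⟨l, hl⟩, i, j))) * hidden d0 d n θ x l j := by
  simp [hidden, hl]

-- The functional `g` absorbs the topmost weight matrix in the induction step.
lemma sum_mul_hidden (θ : Param d0 d n → ℝ) (x : Fin d0 → ℝ) {l : ℕ} (hl : l ≤ d - 1)
    (g : Fin n → ℝ) :
    ∑ i, g i * hidden d0 d n θ x l i =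
      ∑ p : Fin (l + 1) → Fin n, ∑ j, x j * (g (p (Fin.last l)) * (θ (.inr (.inl (p 0, j))) *
        ∏ k : Fin l, θ (.inr (.inr (k.castLE hl, p k.succ, p k.castSucc))))) := by
  induction l generalizing g with
  | zero =>
    rw [← (Equiv.funUnique (Fin 1) (Fin n)).symm.sum_comp]
    simp [hidden, Finset.mul_sum, mul_comm, mul_left_comm]
  | succ l ih =>
    rw [← (Fin.snocEquiv fun _ => Fin n).sum_comp, Fintype.sum_prod_type]
    refine Finset.sum_congr rfl fun i _ => ?_
    rw [hidden_succ θ x hl, ih (Nat.le_of_succ_le hl), Finset.mul_sum]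
    refine Finset.sum_congr rfl fun p _ => ?_
    rw [Finset.mul_sum]
    refine Finset.sum_congr rfl fun j _ => ?_
    have hlast : Fin.snocEquiv (fun _ => Fin n) (i, p) (Fin.last (l + 1)) = i :=
      Fin.snoc_last (α := fun _ => Fin n) i p
    have hinit (k : Fin (l + 1)) : Fin.snocEquiv (fun _ => Fin n) (i, p) k.castSucc = p k :=
      Fin.snoc_castSucc (α := fun _ => Fin n) i p k
    have hfirst : Fin.snocEquiv (fun _ => Fin n) (i, p) 0 = p 0 := hinit 0
    rw [Fin.prod_univ_castSucc, hfirst, hinit, Fin.succ_last, hlast]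
    simp only [Fin.succ_castSucc, hinit, Fin.castLE, Fin.val_castSucc, Fin.val_last]
    ring

/-- The coefficient in the network function on the input `x` of the monomial of the path `γ`. -/
noncomputable def pathCoeff (x : Fin d0 → ℝ) (γ : NetPath d0 d n) : ℝ :=
  (√((n : ℝ) ^ d * d0))⁻¹ * x γ.2

lemma net_eq_squarefreePoly (x : Fin d0 → ℝ) :
    (fun θ => net d0 d n θ x) = squarefreePoly pathParams (pathCoeff x) := by
  funext θ
  simp [net, squarefreePoly, pathCoeff, sum_mul_hidden θ x le_rfl, prod_pathParams,
    Fintype.sum_prod_type, Finset.mul_sum, mul_assoc]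

lemma pathCoeff_mul_pathCoeff (x x' : Fin d0 → ℝ) (γ : NetPath d0 d n) :
    pathCoeff x γ * pathCoeff x' γ = ((n : ℝ) ^ d * d0)⁻¹ * (x γ.2 * x' γ.2) := by
  rw [pathCoeff, pathCoeff, mul_mul_mul_comm, ← mul_inv, Real.mul_self_sqrt (by positivity)]

lemma mul_sum_pathCoeff_mul_pathCoeff (hd0 : 0 < d0) (hd : 1 ≤ d) (hn : 1 ≤ n)
    (x x' : Fin d0 → ℝ) :
    (d0 : ℝ) * ∑ γ : NetPath d0 d n, pathCoeff x γ * pathCoeff x' γ =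
      ∑ j, x j * x' j := by
  simp only [pathCoeff_mul_pathCoeff, ← Finset.mul_sum, Fintype.sum_prod_type, Finset.sum_const,
    Finset.card_univ, Fintype.card_fun, Fintype.card_fin, Nat.sub_add_cancel hd, nsmul_eq_mul,
    Nat.cast_pow]
  field_simp

end Network

theorem deep_linear_fc_ntk_mean_general (d0 d : ℕ) (hd0 : 0 < d0) (hd : 1 ≤ d)
    (x x' : Fin d0 → ℝ) (n : ℕ) (hn : 1 ≤ n) (ν : Param d0 d n → Measure ℝ)
    [∀ p, IsStandardized (ν p)] :
    ∫ θ, NTK d0 d n θ x x' ∂Measure.pi ν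
      = ((d : ℝ) + 1) * (∑ j : Fin d0, x j * x' j) / (d0 : ℝ) := by
  calc
    _ = ∑ γ : NetPath d0 d n, ((pathParams γ).card : ℝ) * (pathCoeff x γ * pathCoeff x' γ) := by
      simp only [NTK, net_eq_squarefreePoly]
      exact integral_sum_fderiv_squarefreePoly_mul pathParams_injective _ _
    _ = ((d : ℝ) + 1) * ∑ γ : NetPath d0 d n, pathCoeff x γ * pathCoeff x' γ := by
      simp [card_pathParams hd, Finset.mul_sum]
    _ = ((d : ℝ) + 1) * (∑ j, x j * x' j) / d0 := by
      rw [← mul_sum_pathCoeff_mul_pathCoeff hd0 hd hn, mul_div_assoc,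
        mul_div_cancel_left₀ _ (Nat.cast_ne_zero.2 hd0.ne')]

/-- for a deep linear fully connected network of depth `d` and width `n`,
`E_θ[Θ(x,x')] = (d+1) ⟨x, x'⟩ / d0`, independent of `n`. -/
theorem deep_linear_fc_ntk_mean (d0 d : ℕ) (hd0 : 0 < d0) (hd : 1 ≤ d)
    (x x' : Fin d0 → ℝ) (n : ℕ) (hn : 1 ≤ n) :
    ∫ θ, NTK d0 d n θ x x' ∂(gaussParam d0 d n)
      = ((d : ℝ) + 1) * (∑ j : Fin d0, x j * x' j) / (d0 : ℝ) := by
  exact deep_linear_fc_ntk_mean_general d0 d hd0 hd x x' n hn _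

end DeepLinearFC
end

section
/- Let f be a one-hidden-layer network of width n with smooth activation σ such that σ and all its derivatives are polynomially bounded, and let Θ be its neural tangent kernel. Then for all fixed inputs x, x' ∈ ℝ^{d_0} there exists a constant K (depending on σ, d_0, x, x' but not on n) such that Var_θ[Θ(x,x')] = E_θ[Θ(x,x')^2] − (E_θ[Θ(x,x')])^2 ≤ K / n for all n ≥ 1. -/
open MeasureTheory ProbabilityTheory

namespace OneHiddenLayer

/-- Parameter index type for a one-hidden-layer network of width `n` on inputs in `ℝ^{d0}`:
the input weight vectors `w_i` (`Fin n × Fin d0`) and the readout weights `v_i` (`Fin n`). -/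
abbrev Param (d0 n : ℕ) : Type := (Fin n × Fin d0) ⊕ Fin n

/-- The one-hidden-layer network `f(x) = n^{-1/2} Σ_i v_i σ(d0^{-1/2} w_i ⬝ x)`. -/
noncomputable def net (σ : ℝ → ℝ) (d0 n : ℕ) (θ : Param d0 n → ℝ) (x : Fin d0 → ℝ) : ℝ :=
  (Real.sqrt (n : ℝ))⁻¹ * ∑ i : Fin n, θ (.inr i) *
    σ ((Real.sqrt (d0 : ℝ))⁻¹ * ∑ j : Fin d0, θ (.inl (i, j)) * x j)

/-- All parameters are i.i.d. standard Gaussians. -/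
noncomputable def gaussParam (d0 n : ℕ) : Measure (Param d0 n → ℝ) :=
  Measure.pi fun _ => gaussianReal 0 1

/-- A single standard Gaussian vector `w ∼ N(0, I_{d0})`. -/
noncomputable def gaussVec (d0 : ℕ) : Measure (Fin d0 → ℝ) :=
  Measure.pi fun _ => gaussianReal 0 1

/-- The neural tangent kernel `Θ(x,x') = Σ_μ ∂f(x)/∂θ_μ ⬝ ∂f(x')/∂θ_μ`. -/
noncomputable def NTK (σ : ℝ → ℝ) (d0 n : ℕ) (θ : Param d0 n → ℝ) (x x' : Fin d0 → ℝ) : ℝ :=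
  ∑ μ : Param d0 n,
    fderiv ℝ (fun θ' => net σ d0 n θ' x) θ (Pi.single μ 1) *
    fderiv ℝ (fun θ' => net σ d0 n θ' x') θ (Pi.single μ 1)

/-!
Differentiating the network in each parameter shows that `Θ(x,x')` is the average over the hidden
neurons of one fixed function of the weights attached to a neuron. Distinct neurons carry
disjoint sets of parameters, so this is an average of `n` independent copies of a single random
variable, and its variance is the variance of one copy divided by `n`. That variance is finite
because `σ'`, and hence also `σ`, grows at most polynomially while the weights have moments of all
orders.
-/

open scoped ENNReal

section Moments

variable {Ω : Type*} [MeasurableSpace Ω] {P : Measure Ω} {f g : Ω → ℝ}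

/-- The real random variable `f` has moments of all finite orders under `P`. This class is closed
under products, unlike `L^p` for a single finite `p`. -/
def HasAllMoments (f : Ω → ℝ) (P : Measure Ω) : Prop :=
  ∀ p : ℝ≥0∞, p ≠ ∞ → MemLp f p P

/-- Growth of a real function at most polynomial, the condition the theorem puts on `σ` and its
derivatives. -/
def HasPolynomialGrowth (g : ℝ → ℝ) : Prop :=
  ∃ C : ℝ, ∃ r : ℕ, ∀ t : ℝ, |g t| ≤ C * (1 + |t|) ^ r

theorem HasPolynomialGrowth.of_deriv {g : ℝ → ℝ} (hg : Differentiable ℝ g)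
    (hg' : HasPolynomialGrowth (deriv g)) : HasPolynomialGrowth g := by
  obtain ⟨C, r, hC⟩ := hg'
  have hC0 : 0 ≤ C := by simpa using (abs_nonneg _).trans (hC 0)
  refine ⟨|g 0| + C, r + 1, fun t => ?_⟩
  have hmvt : |g t - g 0| ≤ C * (1 + |t|) ^ r * |t| := by
    have hderiv : ∀ s ∈ Metric.closedBall (0 : ℝ) |t|, ‖deriv g s‖ ≤ C * (1 + |t|) ^ r := by
      intro s hs
      have hst : |s| ≤ |t| := by simpa using hs
      exact (hC s).trans (by gcongr)
    simpa using (convex_closedBall (0 : ℝ) |t|).norm_image_sub_le_of_norm_deriv_le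
      (fun s _ => hg s) hderiv (x := 0) (y := t) (by simp) (by simp)
  have hone : 1 ≤ (1 + |t|) ^ (r + 1) := one_le_pow₀ (by simp)
  calc |g t| ≤ |g 0| + |g t - g 0| := by simpa using abs_add_le (g 0) (g t - g 0)
    _ ≤ |g 0| * 1 + C * (1 + |t|) ^ r * (1 + |t|) := by
        rw [mul_one]
        gcongr
        exact hmvt.trans (by gcongr; simp)
    _ ≤ |g 0| * (1 + |t|) ^ (r + 1) + C * (1 + |t|) ^ r * (1 + |t|) := by gcongr
    _ = (|g 0| + C) * (1 + |t|) ^ (r + 1) := by ring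

namespace HasAllMoments

theorem const [IsFiniteMeasure P] (c : ℝ) : HasAllMoments (fun _ => c) P :=
  fun _ _ => memLp_const c

theorem add (hf : HasAllMoments f P) (hg : HasAllMoments g P) :
    HasAllMoments (fun ω => f ω + g ω) P :=
  fun p hp => (hf p hp).add (hg p hp)

theorem sum {ι : Type*} {f : ι → Ω → ℝ} (s : Finset ι) (hf : ∀ i ∈ s, HasAllMoments (f i) P) :
    HasAllMoments (fun ω => ∑ i ∈ s, f i ω) P :=
  fun p hp => memLp_finsetSum s fun i hi => hf i hi p hp

theorem abs (hf : HasAllMoments f P) : HasAllMoments (fun ω => |f ω|) P :=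
  fun p hp => (hf p hp).norm

theorem mul (hf : HasAllMoments f P) (hg : HasAllMoments g P) :
    HasAllMoments (fun ω => f ω * g ω) P := by
  intro p hp
  have hp2 : 2 * p ≠ ∞ := ENNReal.mul_ne_top (by simp) hp
  have : ENNReal.HolderTriple (2 * p) (2 * p) p := ⟨by
    rw [ENNReal.mul_inv (by simp) (by simp), ← add_mul, ENNReal.inv_two_add_inv_two, one_mul]⟩
  exact (hg _ hp2).mul (hf _ hp2)

theorem const_mul (hf : HasAllMoments f P) (c : ℝ) : HasAllMoments (fun ω => c * f ω) P :=
  fun p hp => (hf p hp).const_mul c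

theorem mul_const (hf : HasAllMoments f P) (c : ℝ) : HasAllMoments (fun ω => f ω * c) P :=
  fun p hp => (hf p hp).mul_const c

theorem pow [IsFiniteMeasure P] (hf : HasAllMoments f P) (r : ℕ) :
    HasAllMoments (fun ω => f ω ^ r) P := by
  induction r with
  | zero => simpa only [pow_zero] using const 1
  | succ r ih => simpa only [pow_succ] using ih.mul hf

theorem comp_of_polynomialGrowth [IsFiniteMeasure P] {h : ℝ → ℝ} (hf : HasAllMoments f P)
    (hh : Measurable h) (hgrowth : HasPolynomialGrowth h) :
    HasAllMoments (fun ω => h (f ω)) P := by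
  obtain ⟨C, r, hC⟩ := hgrowth
  intro p hp
  exact ((((const 1).add hf.abs).pow r).const_mul C p hp).mono'
    (hh.comp_aemeasurable (hf p hp).aemeasurable).aestronglyMeasurable (.of_forall fun _ => hC _)

end HasAllMoments

theorem hasAllMoments_eval_pi {τ : Type*} [Fintype τ] {μ : τ → Measure ℝ}
    [∀ k, IsProbabilityMeasure (μ k)] {k : τ} (hμ : HasAllMoments id (μ k)) :
    HasAllMoments (fun z => z k) (Measure.pi μ) :=
  fun p hp => (hμ p hp).comp_measurePreserving (measurePreserving_eval μ k)

end Moments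

section ProductMeasure

variable {ι κ τ Ω : Type*} [Fintype ι] [MeasurableSpace Ω]

theorem measurePreserving_pi_curry [Fintype κ] [Fintype τ] (e : ι × κ ≃ τ) (μ : τ → Measure Ω)
    [∀ t, IsProbabilityMeasure (μ t)] :
    MeasurePreserving (fun (θ : τ → Ω) i j => θ (e (i, j))) (Measure.pi μ)
      (Measure.pi fun i => Measure.pi fun j => μ (e (i, j))) := by
  have hreindex := (measurePreserving_piCongrLeft μ e).symm
  have hcurry : MeasurePreserving (MeasurableEquiv.curry ι κ Ω)
      (Measure.pi fun p => μ (e p)) (Measure.pi fun i => Measure.pi fun j => μ (e (i, j))) :=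
    ⟨MeasurableEquiv.measurable _, by
      simpa only [Measure.infinitePi_eq_pi] using
        Measure.infinitePi_map_curry (fun i j => μ (e (i, j)))⟩
  exact hcurry.comp hreindex

theorem variance_average_pi {μ : Measure Ω} [IsProbabilityMeasure μ] {X : Ω → ℝ}
    (hX : MemLp X 2 μ) :
    Var[fun ω => (Fintype.card ι : ℝ)⁻¹ * ∑ i, X (ω i); Measure.pi fun _ : ι => μ] =
      Var[X; μ] / Fintype.card ι := by
  have hsum := variance_sum_pi (ι := ι) (X := fun _ => X) fun _ => hX
  simp only [Finset.sum_fn, Finset.sum_const, Finset.card_univ, nsmul_eq_mul] at hsum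
  rw [variance_const_mul, hsum]
  rcases eq_or_ne (Fintype.card ι : ℝ) 0 with hcard | hcard
  · simp [hcard]
  · field_simp

end ProductMeasure

section Kernel

variable {σ : ℝ → ℝ} {d0 n : ℕ}

/-- The argument `d0^{-1/2} w ⬝ x` of the activation in a neuron with input weights `w`, as a linear
map in `w`. -/
noncomputable def preactivation (x : Fin d0 → ℝ) : (Fin d0 → ℝ) →L[ℝ] ℝ :=
  (Real.sqrt (d0 : ℝ))⁻¹ • ∑ j, x j • ContinuousLinearMap.proj j

theorem preactivation_apply (x w : Fin d0 → ℝ) :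
    preactivation x w = (Real.sqrt (d0 : ℝ))⁻¹ * ∑ j, w j * x j := by
  simp [preactivation, mul_comm]

theorem preactivation_single (x : Fin d0 → ℝ) (j : Fin d0) :
    preactivation x (Pi.single j 1) = (Real.sqrt (d0 : ℝ))⁻¹ * x j := by
  simp [preactivation_apply, Pi.single_apply]

/-- The contribution of one neuron to the neural tangent kernel, before the normalization by the
width. The weights `z` of the neuron are its input weights `z (.inl j)` and its readout weight
`z (.inr ())`. -/
noncomputable def neuronNTK (σ : ℝ → ℝ) (x x' : Fin d0 → ℝ) (z : Fin d0 ⊕ Unit → ℝ) : ℝ :=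
  σ (preactivation x fun j => z (.inl j)) * σ (preactivation x' fun j => z (.inl j)) +
    z (.inr ()) ^ 2 *
      (deriv σ (preactivation x fun j => z (.inl j)) *
        deriv σ (preactivation x' fun j => z (.inl j))) *
      ((d0 : ℝ)⁻¹ * ∑ j, x j * x' j)

/-- The grouping of the parameters by neurons: `(i, k)` is the weight `k` of the neuron `i`, with
weights labelled as in `neuronNTK`. -/
def neuronParamEquiv (d0 n : ℕ) : Fin n × (Fin d0 ⊕ Unit) ≃ Param d0 n :=
  (Equiv.prodSumDistrib _ _ _).trans (Equiv.sumCongr (Equiv.refl _) (Equiv.prodPUnit _))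

theorem neuronParamEquiv_inl (i : Fin n) (j : Fin d0) :
    neuronParamEquiv d0 n (i, .inl j) = .inl (i, j) :=
  rfl

theorem neuronParamEquiv_inr (i : Fin n) : neuronParamEquiv d0 n (i, .inr ()) = .inr i :=
  rfl

theorem net_eq (θ : Param d0 n → ℝ) (x : Fin d0 → ℝ) :
    net σ d0 n θ x = (Real.sqrt (n : ℝ))⁻¹ * ∑ i,
      θ (.inr i) * σ (preactivation x fun j => θ (.inl (i, j))) := by
  simp only [net, preactivation_apply]

theorem fderiv_net_apply (hσ : Differentiable ℝ σ) (θ δ : Param d0 n → ℝ) (x : Fin d0 → ℝ) :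
    fderiv ℝ (fun θ' => net σ d0 n θ' x) θ δ =
      (Real.sqrt (n : ℝ))⁻¹ * ∑ i,
        (θ (.inr i) * (deriv σ (preactivation x fun j => θ (.inl (i, j))) *
            preactivation x fun j => δ (.inl (i, j))) +
          σ (preactivation x fun j => θ (.inl (i, j))) * δ (.inr i)) := by
  let inputWeights (i : Fin n) : (Param d0 n → ℝ) →L[ℝ] (Fin d0 → ℝ) :=
    ContinuousLinearMap.pi fun j => ContinuousLinearMap.proj (.inl (i, j))
  have hinput (i : Fin n) : inputWeights i δ = fun j => δ (.inl (i, j)) := rfl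
  have hpre (i : Fin n) : HasFDerivAt (fun θ' => preactivation x fun j => θ' (.inl (i, j)))
      ((preactivation x).comp (inputWeights i)) θ :=
    ((preactivation x).comp (inputWeights i)).hasFDerivAt
  have hneuron (i : Fin n) :
      HasFDerivAt (fun θ' => θ' (.inr i) * σ (preactivation x fun j => θ' (.inl (i, j))))
        (θ (.inr i) • (deriv σ (preactivation x fun j => θ (.inl (i, j))) •
            (preactivation x).comp (inputWeights i)) +
          σ (preactivation x fun j => θ (.inl (i, j))) • ContinuousLinearMap.proj (.inr i)) θ :=
    (hasFDerivAt_apply (.inr i) θ).mul ((hσ _).hasDerivAt.comp_hasFDerivAt θ (hpre i))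
  have hnet := (HasFDerivAt.fun_sum (u := Finset.univ) fun i _ => hneuron i).const_mul
    (Real.sqrt (n : ℝ))⁻¹
  simp only [net_eq]
  rw [hnet.fderiv]
  simp [hinput]

theorem fderiv_net_single_inr (hσ : Differentiable ℝ σ) (θ : Param d0 n → ℝ) (x : Fin d0 → ℝ)
    (i : Fin n) :
    fderiv ℝ (fun θ' => net σ d0 n θ' x) θ (Pi.single (.inr i) 1) =
      (Real.sqrt (n : ℝ))⁻¹ * σ (preactivation x fun j => θ (.inl (i, j))) := by
  simp [fderiv_net_apply hσ, Pi.single_apply, ← Pi.zero_def]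

theorem fderiv_net_single_inl (hσ : Differentiable ℝ σ) (θ : Param d0 n → ℝ) (x : Fin d0 → ℝ)
    (i : Fin n) (j : Fin d0) :
    fderiv ℝ (fun θ' => net σ d0 n θ' x) θ (Pi.single (.inl (i, j)) 1) =
      (Real.sqrt (n : ℝ))⁻¹ * (θ (.inr i) *
        (deriv σ (preactivation x fun k => θ (.inl (i, k))) *
          ((Real.sqrt (d0 : ℝ))⁻¹ * x j))) := by
  have hinput (k : Fin n) :
      (fun l => (Pi.single (.inl (i, j)) 1 : Param d0 n → ℝ) (.inl (k, l))) =
        if k = i then Pi.single j 1 else 0 := by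
    ext l
    split_ifs with hki <;> simp [Pi.single_apply, hki]
  simp [fderiv_net_apply hσ, hinput, apply_ite (preactivation x), preactivation_single]

theorem NTK_eq_average_neuronNTK (hσ : Differentiable ℝ σ) (θ : Param d0 n → ℝ)
    (x x' : Fin d0 → ℝ) :
    NTK σ d0 n θ x x' =
      (n : ℝ)⁻¹ * ∑ i, neuronNTK σ x x' fun k => θ (neuronParamEquiv d0 n (i, k)) := by
  have sqrt_inv_mul_self (m : ℕ) :
      (Real.sqrt (m : ℝ))⁻¹ * (Real.sqrt (m : ℝ))⁻¹ = (m : ℝ)⁻¹ := by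
    rw [← mul_inv, Real.mul_self_sqrt (Nat.cast_nonneg m)]
  simp only [NTK, Fintype.sum_sum_type, Fintype.sum_prod_type, ← Finset.sum_add_distrib,
    Finset.mul_sum, fderiv_net_single_inl hσ, fderiv_net_single_inr hσ]
  refine Finset.sum_congr rfl fun i _ => ?_
  simp only [neuronNTK, neuronParamEquiv_inl, neuronParamEquiv_inr, ← sqrt_inv_mul_self,
    add_comm (σ _ * σ _), mul_add, Finset.mul_sum]
  congr 1
  · exact Finset.sum_congr rfl fun j _ => by ring
  · ring

end Kernel

section Variance

variable {σ : ℝ → ℝ} {d0 : ℕ} {ν : Measure ℝ} [IsProbabilityMeasure ν]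

theorem hasAllMoments_neuronNTK (hν : HasAllMoments id ν) (hσ : Differentiable ℝ σ)
    (hσ' : HasPolynomialGrowth (deriv σ)) (x x' : Fin d0 → ℝ) :
    HasAllMoments (neuronNTK σ x x') (Measure.pi fun _ => ν) := by
  have hpre (y : Fin d0 → ℝ) : HasAllMoments
      (fun z : Fin d0 ⊕ Unit → ℝ => preactivation y fun j => z (.inl j))
      (Measure.pi fun _ => ν) := by
    simp only [preactivation_apply]
    exact (HasAllMoments.sum _ fun j _ => (hasAllMoments_eval_pi hν).mul_const (y j)).const_mul _
  have hact (y : Fin d0 → ℝ) := (hpre y).comp_of_polynomialGrowth hσ.continuous.measurable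
    (.of_deriv hσ hσ')
  have hact' (y : Fin d0 → ℝ) := (hpre y).comp_of_polynomialGrowth (measurable_deriv σ) hσ'
  exact ((hact x).mul (hact x')).add
    ((((hasAllMoments_eval_pi hν).pow 2).mul ((hact' x).mul (hact' x'))).mul_const _)

theorem memLp_NTK (hσ : Differentiable ℝ σ) {x x' : Fin d0 → ℝ} {p : ℝ≥0∞}
    (hneuron : MemLp (neuronNTK σ x x') p (Measure.pi fun _ => ν)) (n : ℕ) :
    MemLp (fun θ => NTK σ d0 n θ x x') p (Measure.pi fun _ => ν) := by
  have hblocks := measurePreserving_pi_curry (neuronParamEquiv d0 n) fun _ => ν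
  simp only [NTK_eq_average_neuronNTK hσ]
  exact (memLp_finsetSum _ fun i _ =>
    hneuron.comp_measurePreserving ((measurePreserving_eval _ i).comp hblocks)).const_mul _

theorem variance_NTK (hσ : Differentiable ℝ σ) {x x' : Fin d0 → ℝ}
    (hneuron : MemLp (neuronNTK σ x x') 2 (Measure.pi fun _ => ν)) (n : ℕ) :
    Var[fun θ => NTK σ d0 n θ x x'; Measure.pi fun _ => ν] =
      Var[neuronNTK σ x x'; Measure.pi fun _ => ν] / n := by
  have hblocks := measurePreserving_pi_curry (neuronParamEquiv d0 n) fun _ => ν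
  have haverage := variance_average_pi (ι := Fin n) hneuron
  rw [Fintype.card_fin] at haverage
  simp only [NTK_eq_average_neuronNTK hσ]
  rw [← haverage]
  exact hblocks.variance_fun_comp (f := fun z => (n : ℝ)⁻¹ * ∑ i, neuronNTK σ x x' (z i))
    ((Finset.aemeasurable_fun_sum _ fun i _ =>
      (hneuron.comp_measurePreserving (measurePreserving_eval _ i)).aemeasurable).const_mul _)

end Variance

theorem one_hidden_layer_ntk_variance_general {ν : Measure ℝ} [IsProbabilityMeasure ν]
    (hν : HasAllMoments id ν) {σ : ℝ → ℝ} (hσ : Differentiable ℝ σ)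
    (hσ' : HasPolynomialGrowth (deriv σ)) {d0 : ℕ} (x x' : Fin d0 → ℝ) :
    ∃ K : ℝ, ∀ n : ℕ, 1 ≤ n →
      (∫ θ, (NTK σ d0 n θ x x') ^ 2 ∂(Measure.pi fun _ => ν))
        - (∫ θ, NTK σ d0 n θ x x' ∂(Measure.pi fun _ => ν)) ^ 2 = K / (n : ℝ) := by
  have hneuron := hasAllMoments_neuronNTK hν hσ hσ' x x' 2 (by simp)
  refine ⟨Var[neuronNTK σ x x'; Measure.pi fun _ => ν], fun n _ => ?_⟩
  rw [← variance_NTK hσ hneuron n]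
  exact (variance_eq_sub (memLp_NTK hσ hneuron n)).symm

/-- for a one-hidden-layer network of width `n` with smooth activation `σ`
all of whose derivatives are polynomially bounded, the variance of the NTK at fixed inputs
is bounded by `K / n` with `K` independent of `n`. -/
theorem one_hidden_layer_ntk_variance (σ : ℝ → ℝ) (hσs : ContDiff ℝ (⊤ : ℕ∞) σ)
    (hσp : ∀ m : ℕ, ∃ C : ℝ, ∃ r : ℕ, ∀ t : ℝ, |iteratedDeriv m σ t| ≤ C * (1 + |t|) ^ r)
    (d0 : ℕ) (hd0 : 0 < d0) (x x' : Fin d0 → ℝ) :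
    ∃ K : ℝ, ∀ n : ℕ, 1 ≤ n →
      (∫ θ, (NTK σ d0 n θ x x') ^ 2 ∂(gaussParam d0 n))
        - (∫ θ, NTK σ d0 n θ x x' ∂(gaussParam d0 n)) ^ 2 ≤ K / (n : ℝ) := by
  obtain ⟨K, hK⟩ := one_hidden_layer_ntk_variance_general memLp_id_gaussianReal'
    (hσs.differentiable (by simp)) (iteratedDeriv_one (f := σ) ▸ hσp 1) x x'
  exact ⟨K, fun n hn => (hK n hn).le⟩

end OneHiddenLayer
end
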